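/- Let X ∈ GL(n, K̄) and assume that for every σ ∈ Gal(K̄/K) the matrix X⁻¹·σ(X) is diagonal. Then there exist an invertible matrix Q ∈ GL(n, K̄) all of whose entries lie in the image of K under the algebra map K → K̄, and an invertible diagonal matrix D ∈ GL(n, K̄), such that X = Q·D. -/

import Mathlib

noncomputable section

/-- `K = ℂ((ℏ))`, the field of formal Laurent series over `ℂ`. -/
abbrev K : Type := LaurentSeries ℂ

/-- A fixed algebraic closure of `K`. -/
abbrev Kbar : Type := AlgebraicClosure K

/-!
Diagonality of `X⁻¹ * σ(X)` says that `σ` multiplies each column of `X` by a scalar, so the line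
spanned by each column is Galois-stable. Such a line is defined over the base field: dividing a
spanning vector by one of its nonzero coordinates leaves ratios of coordinates, and these are fixed
because the scalar cancels.
-/

section GaloisStable

variable {L G ι : Type*} [Field L] [Group G] [MulSemiringAction G L]

theorem exists_eq_smul_algebraMap_comp_of_forall_smul_eq_smul {A : Type*} [CommSemiring A]
    [Algebra A L] [Algebra.IsInvariant A L G] (v : ι → L) (h : ∀ g : G, ∃ c : L, g • v = c • v) :
    ∃ (d : L) (q : ι → A), d ≠ 0 ∧ v = d • (algebraMap A L ∘ q) := by
  obtain rfl | hv := eq_or_ne v 0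
  · exact ⟨1, 0, one_ne_zero, by ext; simp⟩
  obtain ⟨p, hp⟩ := Function.ne_iff.mp hv
  have ratio_fixed (i : ι) (g : G) : g • (v i / v p) = v i / v p := by
    obtain ⟨c, hc⟩ := h g
    have hgv (k : ι) : g • v k = c * v k := congrFun hc k
    have hc0 : c ≠ 0 := by
      rintro rfl
      exact hp ((smul_eq_zero_iff_eq g).mp ((hgv p).trans (zero_mul _)))
    rw [smul_div₀', hgv, hgv, mul_div_mul_left _ _ hc0]
  choose q hq using fun i => Algebra.IsInvariant.isInvariant (A := A) _ (ratio_fixed i)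
  refine ⟨v p, q, hp, ?_⟩
  ext i
  rw [Pi.smul_apply, Function.comp_apply, hq, smul_eq_mul, mul_div_cancel₀ _ hp]

theorem col_eq_smul_col_of_isDiag_inv_mul {R : Type*} [CommRing R] [Fintype ι] [DecidableEq ι]
    {X Y : Matrix ι ι R} (hX : IsUnit X) (h : (X⁻¹ * Y).IsDiag) (j : ι) :
    Y.col j = (X⁻¹ * Y) j j • X.col j := by
  have hY : X * Matrix.diagonal (X⁻¹ * Y).diag = Y := by
    rw [h.diagonal_diag, Matrix.mul_nonsing_inv_cancel_left X Y (X.isUnit_iff_isUnit_det.mp hX)]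
  ext i
  simpa [mul_comm] using (congrFun₂ hY i j).symm

theorem statement3_general {A : Type*} [CommRing A] [Algebra A L] [Algebra.IsInvariant A L G]
    [Fintype ι] [DecidableEq ι] (X : Matrix ι ι L) (hX : IsUnit X)
    (h : ∀ g : G, (X⁻¹ * X.map (g • ·)).IsDiag) :
    ∃ Q D : Matrix ι ι L,
      IsUnit Q ∧ (∀ i j, Q i j ∈ (algebraMap A L).range) ∧ IsUnit D ∧ D.IsDiag ∧ X = Q * D := by
  choose d q hd hq using fun j =>
    exists_eq_smul_algebraMap_comp_of_forall_smul_eq_smul (A := A) (X.col j)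
      fun g => ⟨_, col_eq_smul_col_of_isDiag_inv_mul hX (h g) j⟩
  let Q : Matrix ι ι L := Matrix.of fun i j => algebraMap A L (q j i)
  have hXQD : X = Q * Matrix.diagonal d := by
    ext i j
    simpa [Q, mul_comm] using congrFun (hq j) i
  have hD : IsUnit (Matrix.diagonal d) :=
    Matrix.isUnit_diagonal.mpr (Pi.isUnit_iff.mpr fun j => (hd j).isUnit)
  exact ⟨Q, Matrix.diagonal d, hD.mul_right_iff.mp (hXQD ▸ hX), fun i j => ⟨q j i, rfl⟩, hD,
    Matrix.isDiag_diagonal d, hXQD⟩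

end GaloisStable

/-- If `X ∈ GL(n, K̄)` satisfies that `X⁻¹·σ(X)` is diagonal for every
`σ ∈ Gal(K̄/K)`, then `X = Q·D` with `Q ∈ GL(n, K̄)` having all entries in (the
image of) `K`, and `D` an invertible diagonal matrix. -/
theorem statement3 (n : ℕ) (X : Matrix (Fin n) (Fin n) Kbar) (hX : IsUnit X)
    (h : ∀ σ : Kbar ≃ₐ[K] Kbar, (X⁻¹ * X.map σ).IsDiag) :
    ∃ Q D : Matrix (Fin n) (Fin n) Kbar,
      IsUnit Q ∧ (∀ i j, Q i j ∈ (algebraMap K Kbar).range) ∧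
      IsUnit D ∧ D.IsDiag ∧ X = Q * D := by
  have : CharZero K := algebraRat.charZero K
  exact statement3_general X hX h
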